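/- arXiv:2409.02025 — 2 statements merged into one kernel-verified Lean document; each statement's English description precedes it below -/
import Mathlib

section
/- For each r > 0 let u_r : Ω^Q → ℝ be the unique solution of the stationary discounted HJB system 0 = −r u_r(q) + H(q, u_r(q−1) − u_r(q), u_r(q+1) − u_r(q)), q ∈ Ω^Q. Then: (i) there exists a constant γ̂ ∈ ℝ such that lim_{r → 0⁺} r u_r(q) = γ̂ for every q ∈ Ω^Q; (ii) for every q ∈ Ω^Q the limit v̂(q) := lim_{r → 0⁺} (u_r(q) − u_r(0)) exists; and (iii) the pair (γ̂, v̂) solves the ergodic HJB equation 0 = −γ̂ + H(q, v̂(q−1) − v̂(q), v̂(q+1) − v̂(q)) for all q ∈ Ω^Q. -/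
/-!
The vanishing-discount argument, in three steps.

*A priori bounds.* At a maximum of `u r` all increments are nonpositive and at a minimum the
exponential terms are nonnegative, so `r * u r q` is bounded uniformly in `r` and `q`
(`IsStatSol.le_mul`, `IsStatSol.mul_le`). The equation then bounds each exponential term, hence each
increment of `u r`, and summing increments bounds `u r q - u r 0` (`IsStatSol.abs_sub_zero_le`).

*Uniqueness for the ergodic equation.* If `(g₁, v₁)` and `(g₂, v₂)` are solutions, evaluating both
equations at a maximum of `v₁ - v₂` and using monotonicity of the Hamiltonian gives `g₁ ≤ g₂`; by
symmetry the constants agree. Strict monotonicity then propagates the maximum of `v₁ - v₂` to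
neighbouring points, so `v₁ - v₂` is constant (`IsErgSol.unique`).

*Compactness.* By the bounds, `r ↦ (r * u r 0, u r - u r 0)` stays in a compact set. Each of its
cluster points as `r → 0⁺` solves the ergodic equation with `v 0 = 0`, so there is only one cluster
point, and the whole family converges to it.
-/

open Filter

/-- The optimised Hamiltonian of the ergodic Avellaneda–Stoikov model. -/
noncomputable def Hopt (qlow qhigh : ℤ) (lp lm kp km phi : ℝ) (q : ℤ) (p1 p2 : ℝ) : ℝ :=
  (if qlow < q then (lp / kp) * Real.exp (kp * p1 - 1) else 0)
    + (if q < qhigh then (lm / km) * Real.exp (km * p2 - 1) else 0)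
    - phi * (q : ℝ) ^ 2

/-- `w` solves the stationary discounted HJB system with discount factor `r`. -/
def IsStatSol (qlow qhigh : ℤ) (lp lm kp km phi : ℝ) (r : ℝ) (w : ℤ → ℝ) : Prop :=
  ∀ q ∈ Finset.Icc qlow qhigh,
    0 = -r * w q + Hopt qlow qhigh lp lm kp km phi q (w (q - 1) - w q) (w (q + 1) - w q)

/-- The pair `(g, v)` solves the ergodic HJB equation on `{qlow, …, qhigh}`. -/
def IsErgSol (qlow qhigh : ℤ) (lp lm kp km phi : ℝ) (g : ℝ) (v : ℤ → ℝ) : Prop :=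
  ∀ q ∈ Finset.Icc qlow qhigh,
    0 = -g + Hopt qlow qhigh lp lm kp km phi q (v (q - 1) - v q) (v (q + 1) - v q)

/-! ### Uniqueness for the ergodic equation -/

section Hamiltonian

variable {qlow qhigh : ℤ} {lp lm kp km phi : ℝ}

lemma Hopt_mono (hlp : 0 < lp) (hlm : 0 < lm) (hkp : 0 < kp) (hkm : 0 < km)
    {q : ℤ} {p1 p2 p1' p2' : ℝ} (h1 : qlow < q → p1 ≤ p1') (h2 : q < qhigh → p2 ≤ p2') :
    Hopt qlow qhigh lp lm kp km phi q p1 p2 ≤ Hopt qlow qhigh lp lm kp km phi q p1' p2' := by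
  unfold Hopt
  gcongr
  · split_ifs with h
    · have := h1 h
      gcongr
    · exact le_rfl
  · split_ifs with h
    · have := h2 h
      gcongr
    · exact le_rfl

lemma Hopt_strictMono (hlp : 0 < lp) (hlm : 0 < lm) (hkp : 0 < kp) (hkm : 0 < km)
    {q : ℤ} {p1 p2 p1' p2' : ℝ} (h1 : qlow < q → p1 ≤ p1') (h2 : q < qhigh → p2 ≤ p2')
    (h : Hopt qlow qhigh lp lm kp km phi q p1' p2' ≤ Hopt qlow qhigh lp lm kp km phi q p1 p2) :
    (qlow < q → p1 = p1') ∧ (q < qhigh → p2 = p2') := by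
  have hA : 0 < lp / kp := by positivity
  have hB : 0 < lm / km := by positivity
  constructor
  · intro hq
    by_contra hne
    have hlt : p1 < p1' := lt_of_le_of_ne (h1 hq) hne
    -- Lowering the first increment strictly lowers its exponential term, at fixed second increment.
    have e1 : Hopt qlow qhigh lp lm kp km phi q p1 p2' <
        Hopt qlow qhigh lp lm kp km phi q p1' p2' := by
      unfold Hopt
      rw [if_pos hq, if_pos hq]
      gcongr
    have e2 : Hopt qlow qhigh lp lm kp km phi q p1 p2 ≤
        Hopt qlow qhigh lp lm kp km phi q p1 p2' :=
      Hopt_mono hlp hlm hkp hkm (fun _ => le_rfl) h2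
    linarith
  · intro hq
    by_contra hne
    have hlt : p2 < p2' := lt_of_le_of_ne (h2 hq) hne
    have e1 : Hopt qlow qhigh lp lm kp km phi q p1' p2 <
        Hopt qlow qhigh lp lm kp km phi q p1' p2' := by
      unfold Hopt
      rw [if_pos hq, if_pos hq]
      gcongr
    have e2 : Hopt qlow qhigh lp lm kp km phi q p1 p2 ≤
        Hopt qlow qhigh lp lm kp km phi q p1' p2 :=
      Hopt_mono hlp hlm hkp hkm h1 (fun _ => le_rfl)
    linarith

/-- On an integer interval, a property that holds somewhere and passes to both neighbours inside
the interval holds everywhere. -/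
lemma Icc_propagate {P : ℤ → Prop} {q0 : ℤ} (hq0 : q0 ∈ Finset.Icc qlow qhigh) (h0 : P q0)
    (hdown : ∀ q ∈ Finset.Icc qlow qhigh, qlow < q → P q → P (q - 1))
    (hup : ∀ q ∈ Finset.Icc qlow qhigh, q < qhigh → P q → P (q + 1)) :
    ∀ q ∈ Finset.Icc qlow qhigh, P q := by
  simp only [Finset.mem_Icc] at *
  intro q hq
  rcases le_total q0 q with h | h
  · have key : q ≤ qhigh → P q := by
      refine Int.leInduction (m := q0) (motive := fun n _ => n ≤ qhigh → P n)
        (fun _ => h0) ?_ q h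
      intro n hn ih hn'
      exact hup n ⟨by omega, by omega⟩ (by omega) (ih (by omega))
    exact key hq.2
  · have key : qlow ≤ q → P q := by
      refine Int.leInductionDown (m := q0) (motive := fun n _ => qlow ≤ n → P n)
        (fun _ => h0) ?_ q h
      intro n hn ih hn'
      exact hdown n ⟨by omega, by omega⟩ (by omega) (ih (by omega))
    exact key hq.1

/-- Comparison of the ergodic constants at a maximum of `v₁ - v₂`. -/
lemma IsErgSol.le (hlp : 0 < lp) (hlm : 0 < lm) (hkp : 0 < kp) (hkm : 0 < km)
    (hne : (Finset.Icc qlow qhigh).Nonempty) {g₁ g₂ : ℝ} {v₁ v₂ : ℤ → ℝ}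
    (h₁ : IsErgSol qlow qhigh lp lm kp km phi g₁ v₁)
    (h₂ : IsErgSol qlow qhigh lp lm kp km phi g₂ v₂) : g₁ ≤ g₂ := by
  obtain ⟨q, hq, hmax⟩ := Finset.exists_max_image _ (fun q => v₁ q - v₂ q) hne
  have e₁ := h₁ q hq
  have e₂ := h₂ q hq
  have hq' := Finset.mem_Icc.1 hq
  have := Hopt_mono (qlow := qlow) (qhigh := qhigh) (phi := phi) hlp hlm hkp hkm (q := q)
    (p1 := v₁ (q - 1) - v₁ q) (p2 := v₁ (q + 1) - v₁ q)
    (p1' := v₂ (q - 1) - v₂ q) (p2' := v₂ (q + 1) - v₂ q)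
    (fun h => by linarith [hmax (q - 1) (Finset.mem_Icc.2 ⟨by omega, by omega⟩)])
    (fun h => by linarith [hmax (q + 1) (Finset.mem_Icc.2 ⟨by omega, by omega⟩)])
  linarith

/-- The ergodic constant is unique, and the potential is unique once normalised at `0`. -/
lemma IsErgSol.unique (hlp : 0 < lp) (hlm : 0 < lm) (hkp : 0 < kp) (hkm : 0 < km)
    (hz : (0 : ℤ) ∈ Finset.Icc qlow qhigh) {g₁ g₂ : ℝ} {v₁ v₂ : ℤ → ℝ}
    (h₁ : IsErgSol qlow qhigh lp lm kp km phi g₁ v₁)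
    (h₂ : IsErgSol qlow qhigh lp lm kp km phi g₂ v₂) (hv₁ : v₁ 0 = 0) (hv₂ : v₂ 0 = 0) :
    g₁ = g₂ ∧ ∀ q ∈ Finset.Icc qlow qhigh, v₁ q = v₂ q := by
  have hg : g₁ = g₂ := le_antisymm (h₁.le hlp hlm hkp hkm ⟨0, hz⟩ h₂)
    (h₂.le hlp hlm hkp hkm ⟨0, hz⟩ h₁)
  refine ⟨hg, ?_⟩
  obtain ⟨q0, hq0, hmax⟩ := Finset.exists_max_image _ (fun q => v₁ q - v₂ q) ⟨0, hz⟩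
  -- At a maximum of `v₁ - v₂` equality of the Hamiltonians forces equality of the increments.
  have step : ∀ q ∈ Finset.Icc qlow qhigh, v₁ q - v₂ q = v₁ q0 - v₂ q0 →
      (qlow < q → v₁ (q - 1) - v₁ q = v₂ (q - 1) - v₂ q) ∧
      (q < qhigh → v₁ (q + 1) - v₁ q = v₂ (q + 1) - v₂ q) := by
    intro q hq hP
    have e₁ := h₁ q hq
    have e₂ := h₂ q hq
    have hq' := Finset.mem_Icc.1 hq
    exact Hopt_strictMono (phi := phi) hlp hlm hkp hkm
      (fun h => by linarith [hmax (q - 1) (Finset.mem_Icc.2 ⟨by omega, by omega⟩)])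
      (fun h => by linarith [hmax (q + 1) (Finset.mem_Icc.2 ⟨by omega, by omega⟩)])
      (by linarith)
  have hall := Icc_propagate (P := fun q => v₁ q - v₂ q = v₁ q0 - v₂ q0) hq0 rfl
    (fun q hq h hP => by linarith [(step q hq hP).1 h])
    (fun q hq h hP => by linarith [(step q hq hP).2 h])
  intro q hq
  have a := hall q hq
  have b := hall 0 hz
  linarith

end Hamiltonian

/-! ### A priori bounds for discounted solutions -/

section Bounds

variable {qlow qhigh : ℤ} {lp lm kp km phi r : ℝ} {w : ℤ → ℝ}

lemma phi_mul_sq_le (hphi : 0 ≤ phi) (hz : (0 : ℤ) ∈ Finset.Icc qlow qhigh)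
    {q : ℤ} (hq : q ∈ Finset.Icc qlow qhigh) :
    phi * (q : ℝ) ^ 2 ≤ phi * ((qhigh : ℝ) - qlow) ^ 2 := by
  simp only [Finset.mem_Icc] at hz hq
  have h1 : (qlow : ℝ) ≤ q := by exact_mod_cast hq.1
  have h2 : (q : ℝ) ≤ qhigh := by exact_mod_cast hq.2
  have h3 : (qlow : ℝ) ≤ 0 := by exact_mod_cast hz.1
  have h4 : (0 : ℝ) ≤ qhigh := by exact_mod_cast hz.2
  refine mul_le_mul_of_nonneg_left (sq_le_sq' ?_ ?_) hphi <;> linarith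

lemma IsStatSol.le_mul (hlp : 0 < lp) (hlm : 0 < lm) (hkp : 0 < kp) (hkm : 0 < km)
    (hphi : 0 ≤ phi) (hr : 0 < r) (hz : (0 : ℤ) ∈ Finset.Icc qlow qhigh)
    (hw : IsStatSol qlow qhigh lp lm kp km phi r w) :
    ∀ q ∈ Finset.Icc qlow qhigh, -(phi * ((qhigh : ℝ) - qlow) ^ 2) ≤ r * w q := by
  obtain ⟨q0, hq0, hmin⟩ := Finset.exists_min_image _ w ⟨0, hz⟩
  intro q hq
  have h1 : r * w q0 ≤ r * w q := mul_le_mul_of_nonneg_left (hmin q hq) hr.le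
  have e := hw q0 hq0
  have h2 := phi_mul_sq_le hphi hz hq0
  unfold Hopt at e
  have h3 : 0 ≤ (if qlow < q0 then (lp / kp) * Real.exp (kp * (w (q0 - 1) - w q0) - 1) else 0) := by
    split_ifs <;> positivity
  have h4 : 0 ≤ (if q0 < qhigh then (lm / km) * Real.exp (km * (w (q0 + 1) - w q0) - 1) else 0) := by
    split_ifs <;> positivity
  linarith

lemma IsStatSol.mul_le (hlp : 0 < lp) (hlm : 0 < lm) (hkp : 0 < kp) (hkm : 0 < km)
    (hphi : 0 ≤ phi) (hr : 0 < r) (hz : (0 : ℤ) ∈ Finset.Icc qlow qhigh)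
    (hw : IsStatSol qlow qhigh lp lm kp km phi r w) :
    ∀ q ∈ Finset.Icc qlow qhigh,
      r * w q ≤ lp / kp * Real.exp (-1) + lm / km * Real.exp (-1) := by
  obtain ⟨q0, hq0, hmax⟩ := Finset.exists_max_image _ w ⟨0, hz⟩
  intro q hq
  have h1 : r * w q ≤ r * w q0 := mul_le_mul_of_nonneg_left (hmax q hq) hr.le
  have e := hw q0 hq0
  have hq0' := Finset.mem_Icc.1 hq0
  have h2 := Hopt_mono (qlow := qlow) (qhigh := qhigh) (phi := phi) hlp hlm hkp hkm (q := q0)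
    (p1 := w (q0 - 1) - w q0) (p2 := w (q0 + 1) - w q0) (p1' := 0) (p2' := 0)
    (fun h => by linarith [hmax (q0 - 1) (Finset.mem_Icc.2 ⟨by omega, by omega⟩)])
    (fun h => by linarith [hmax (q0 + 1) (Finset.mem_Icc.2 ⟨by omega, by omega⟩)])
  have h3 : Hopt qlow qhigh lp lm kp km phi q0 0 0 ≤
      lp / kp * Real.exp (-1) + lm / km * Real.exp (-1) := by
    unfold Hopt
    have hA : 0 ≤ lp / kp * Real.exp (-1) := by positivity
    have hB : 0 ≤ lm / km * Real.exp (-1) := by positivity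
    have hP : 0 ≤ phi * (q0 : ℝ) ^ 2 := by positivity
    simp only [mul_zero, zero_sub]
    split_ifs <;> linarith
  linarith

/-- A bound, uniform in the discount factor, for `|r * w q|` and for the two exponential terms of
the Hamiltonian along a solution. -/
noncomputable def statBound (qlow qhigh : ℤ) (lp lm kp km phi : ℝ) : ℝ :=
  lp / kp * Real.exp (-1) + lm / km * Real.exp (-1) + phi * ((qhigh : ℝ) - qlow) ^ 2

/-- A bound, uniform in the discount factor, for the increments of a solution. -/
noncomputable def incrBound (qlow qhigh : ℤ) (lp lm kp km phi : ℝ) : ℝ :=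
  statBound qlow qhigh lp lm kp km phi / lp + statBound qlow qhigh lp lm kp km phi / lm

lemma statBound_nonneg (hlp : 0 < lp) (hlm : 0 < lm) (hkp : 0 < kp) (hkm : 0 < km)
    (hphi : 0 ≤ phi) : 0 ≤ statBound qlow qhigh lp lm kp km phi := by
  unfold statBound
  positivity

/-- From `x + 1 ≤ exp x`: a bound on an exponential term bounds the increment in it. -/
lemma le_div_of_exp_le {l k p C : ℝ} (hl : 0 < l) (hk : 0 < k)
    (h : l / k * Real.exp (k * p - 1) ≤ C) : p ≤ C / l := by
  have h1 := Real.add_one_le_exp (k * p - 1)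
  rw [le_div_iff₀ hl]
  calc p * l = l / k * (k * p - 1 + 1) := by field_simp; ring
    _ ≤ l / k * Real.exp (k * p - 1) := by gcongr
    _ ≤ C := h

lemma IsStatSol.incr_le (hlp : 0 < lp) (hlm : 0 < lm) (hkp : 0 < kp) (hkm : 0 < km)
    (hphi : 0 ≤ phi) (hr : 0 < r) (hz : (0 : ℤ) ∈ Finset.Icc qlow qhigh)
    (hw : IsStatSol qlow qhigh lp lm kp km phi r w) {q : ℤ} (hq : q ∈ Finset.Icc qlow qhigh) :
    (qlow < q → w (q - 1) - w q ≤ incrBound qlow qhigh lp lm kp km phi) ∧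
    (q < qhigh → w (q + 1) - w q ≤ incrBound qlow qhigh lp lm kp km phi) := by
  have e := hw q hq
  have h1 := phi_mul_sq_le hphi hz hq
  have h2 := hw.mul_le hlp hlm hkp hkm hphi hr hz q hq
  unfold Hopt at e
  have h3 : 0 ≤ (if qlow < q then (lp / kp) * Real.exp (kp * (w (q - 1) - w q) - 1) else 0) := by
    split_ifs <;> positivity
  have h4 : 0 ≤ (if q < qhigh then (lm / km) * Real.exp (km * (w (q + 1) - w q) - 1) else 0) := by
    split_ifs <;> positivity
  have hC := statBound_nonneg (qlow := qlow) (qhigh := qhigh) hlp hlm hkp hkm hphi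
  have hp : 0 ≤ statBound qlow qhigh lp lm kp km phi / lp := by positivity
  have hm : 0 ≤ statBound qlow qhigh lp lm kp km phi / lm := by positivity
  constructor
  · intro h
    rw [if_pos h] at e h3
    have := le_div_of_exp_le (C := statBound qlow qhigh lp lm kp km phi) hlp hkp
      (p := w (q - 1) - w q) (by unfold statBound; linarith)
    unfold incrBound
    linarith
  · intro h
    rw [if_pos h] at e h4
    have := le_div_of_exp_le (C := statBound qlow qhigh lp lm kp km phi) hlm hkm
      (p := w (q + 1) - w q) (by unfold statBound; linarith)
    unfold incrBound
    linarith

lemma IsStatSol.abs_sub_zero_le (hlp : 0 < lp) (hlm : 0 < lm) (hkp : 0 < kp) (hkm : 0 < km)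
    (hphi : 0 ≤ phi) (hr : 0 < r) (hz : (0 : ℤ) ∈ Finset.Icc qlow qhigh)
    (hw : IsStatSol qlow qhigh lp lm kp km phi r w) :
    ∀ q ∈ Finset.Icc qlow qhigh,
      |w q - w 0| ≤ incrBound qlow qhigh lp lm kp km phi * |(q : ℝ)| := by
  set D := incrBound qlow qhigh lp lm kp km phi with hD
  have hincr : ∀ q, qlow ≤ q → q < qhigh → |w (q + 1) - w q| ≤ D := by
    intro q h1 h2
    have a := (hw.incr_le hlp hlm hkp hkm hphi hr hz
      (Finset.mem_Icc.2 ⟨h1, h2.le⟩)).2 h2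
    have b := (hw.incr_le hlp hlm hkp hkm hphi hr hz
      (q := q + 1) (Finset.mem_Icc.2 ⟨by omega, by omega⟩)).1 (by omega)
    rw [add_sub_cancel_right] at b
    rw [abs_le]
    constructor <;> linarith
  intro q hq
  simp only [Finset.mem_Icc] at hz hq
  rcases le_total 0 q with h | h
  · have key : q ≤ qhigh → |w q - w 0| ≤ D * (q : ℝ) := by
      refine Int.leInduction (m := 0)
        (motive := fun n _ => n ≤ qhigh → |w n - w 0| ≤ D * (n : ℝ)) (by simp) ?_ q h
      intro n hn ih hn'
      have a := hincr n (by omega) (by omega)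
      have b := ih (by omega)
      have c := abs_sub_le (w (n + 1)) (w n) (w 0)
      push_cast
      linarith
    rw [abs_of_nonneg (by exact_mod_cast h : (0 : ℝ) ≤ q)]
    exact key hq.2
  · have key : qlow ≤ q → |w q - w 0| ≤ D * (-(q : ℝ)) := by
      refine Int.leInductionDown (m := 0)
        (motive := fun n _ => qlow ≤ n → |w n - w 0| ≤ D * (-(n : ℝ))) (by simp) ?_ q h
      intro n hn ih hn'
      have a := hincr (n - 1) (by omega) (by omega)
      rw [sub_add_cancel, abs_sub_comm] at a
      have b := ih (by omega)
      have c := abs_sub_le (w (n - 1)) (w n) (w 0)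
      push_cast
      linarith
    rw [abs_of_nonpos (by exact_mod_cast h : (q : ℝ) ≤ 0)]
    exact key hq.1

end Bounds

/-! ### The vanishing-discount limit -/

/-- The pair `(r * w 0, w - w 0)`, with the second component set to `0` outside the inventory
interval, where the HJB system leaves `w` unconstrained. -/
noncomputable def normPair (qlow qhigh : ℤ) (r : ℝ) (w : ℤ → ℝ) : ℝ × (ℤ → ℝ) :=
  (r * w 0, fun q => if q ∈ Finset.Icc qlow qhigh then w q - w 0 else 0)

/-- The ergodic residual of the normalised pair of a discounted solution is `r * (w q - w 0)`. -/
lemma IsStatSol.residual {qlow qhigh : ℤ} {lp lm kp km phi r : ℝ} {w : ℤ → ℝ}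
    (hw : IsStatSol qlow qhigh lp lm kp km phi r w) {q : ℤ} (hq : q ∈ Finset.Icc qlow qhigh) :
    -(normPair qlow qhigh r w).1 + Hopt qlow qhigh lp lm kp km phi q
      ((normPair qlow qhigh r w).2 (q - 1) - (normPair qlow qhigh r w).2 q)
      ((normPair qlow qhigh r w).2 (q + 1) - (normPair qlow qhigh r w).2 q) =
    r * (w q - w 0) := by
  have e := hw q hq
  have hH : Hopt qlow qhigh lp lm kp km phi q
      ((normPair qlow qhigh r w).2 (q - 1) - (normPair qlow qhigh r w).2 q)
      ((normPair qlow qhigh r w).2 (q + 1) - (normPair qlow qhigh r w).2 q) =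
      Hopt qlow qhigh lp lm kp km phi q (w (q - 1) - w q) (w (q + 1) - w q) := by
    have hq' := Finset.mem_Icc.1 hq
    unfold Hopt normPair
    simp only [if_pos hq]
    congr 2
    · split_ifs with h1 h2
      · ring_nf
      · exact absurd (Finset.mem_Icc.2 ⟨by omega, by omega⟩) h2
      · rfl
    · split_ifs with h1 h2
      · ring_nf
      · exact absurd (Finset.mem_Icc.2 ⟨by omega, by omega⟩) h2
      · rfl
  rw [hH]
  simp only [normPair]
  linarith

theorem stmt4 (qlow qhigh : ℤ) (hlow : qlow < 0) (hhigh : 0 < qhigh)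
    (lp lm kp km phi : ℝ) (hlp : 0 < lp) (hlm : 0 < lm) (hkp : 0 < kp) (hkm : 0 < km)
    (hphi : 0 ≤ phi)
    -- for each r > 0, `u r` is the unique solution of the stationary discounted HJB
    (u : ℝ → ℤ → ℝ)
    (hu : ∀ r : ℝ, 0 < r → IsStatSol qlow qhigh lp lm kp km phi r (u r)) :
    ∃ gam : ℝ, ∃ vhat : ℤ → ℝ,
      -- (i) lim_{r → 0⁺} r u_r(q) = γ̂ for every q
      (∀ q ∈ Finset.Icc qlow qhigh,
        Tendsto (fun r : ℝ => r * u r q) (nhdsWithin 0 (Set.Ioi 0)) (nhds gam)) ∧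
      -- (ii) v̂(q) := lim_{r → 0⁺} (u_r(q) − u_r(0)) exists
      (∀ q ∈ Finset.Icc qlow qhigh,
        Tendsto (fun r : ℝ => u r q - u r 0) (nhdsWithin 0 (Set.Ioi 0)) (nhds (vhat q))) ∧
      -- (iii) (γ̂, v̂) solves the ergodic HJB equation
      (∀ q ∈ Finset.Icc qlow qhigh,
        0 = -gam + Hopt qlow qhigh lp lm kp km phi q
              (vhat (q - 1) - vhat q) (vhat (q + 1) - vhat q)) := by
  have hz : (0 : ℤ) ∈ Finset.Icc qlow qhigh := Finset.mem_Icc.2 ⟨hlow.le, hhigh.le⟩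
  set C := statBound qlow qhigh lp lm kp km phi with hC
  set D := incrBound qlow qhigh lp lm kp km phi with hD
  set l : Filter ℝ := nhdsWithin 0 (Set.Ioi 0) with hl
  set f : ℝ → ℝ × (ℤ → ℝ) := fun r => normPair qlow qhigh r (u r) with hf
  have hpos : ∀ᶠ r in l, 0 < r := self_mem_nhdsWithin
  have hr0 : Tendsto (fun r : ℝ => r) l (nhds 0) := tendsto_id.mono_left nhdsWithin_le_nhds
  let b : ℤ → ℝ := fun q => if q ∈ Finset.Icc qlow qhigh then D * |(q : ℝ)| else 0
  let K : Set (ℝ × (ℤ → ℝ)) :=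
    Set.Icc (-C) C ×ˢ Set.pi Set.univ (fun q => Set.Icc (-(b q)) (b q))
  have hK : IsCompact K := isCompact_Icc.prod (isCompact_univ_pi fun q => isCompact_Icc)
  have hmem : ∀ᶠ r in l, f r ∈ K := by
    filter_upwards [hpos] with r hr
    refine ⟨⟨?_, ?_⟩, fun q _ => ?_⟩
    · have h1 := (hu r hr).le_mul hlp hlm hkp hkm hphi hr hz 0 hz
      have hA : 0 ≤ lp / kp * Real.exp (-1) := by positivity
      have hB : 0 ≤ lm / km * Real.exp (-1) := by positivity
      simp only [hf, normPair, hC, statBound]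
      linarith
    · have h1 := (hu r hr).mul_le hlp hlm hkp hkm hphi hr hz 0 hz
      have hP : 0 ≤ phi * ((qhigh : ℝ) - qlow) ^ 2 := by positivity
      simp only [hf, normPair, hC, statBound]
      linarith
    · by_cases hq : q ∈ Finset.Icc qlow qhigh
      · have := (hu r hr).abs_sub_zero_le hlp hlm hkp hkm hphi hr hz q hq
        simp only [hf, normPair, b, if_pos hq]
        exact abs_le.1 this
      · simp only [hf, normPair, b, if_neg hq, neg_zero, Set.Icc_self, Set.mem_singleton_iff]
  -- Every cluster point solves the ergodic equation: the residual is continuous in the pair and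
  -- tends to `0` along the family.
  have hclus : ∀ y ∈ K, MapClusterPt y l f →
      IsErgSol qlow qhigh lp lm kp km phi y.1 y.2 := by
    intro y _ hy q hq
    let g : ℝ × (ℤ → ℝ) → ℝ := fun y =>
      -y.1 + Hopt qlow qhigh lp lm kp km phi q (y.2 (q - 1) - y.2 q) (y.2 (q + 1) - y.2 q)
    have hg : Continuous g := by
      simp only [g, Hopt]
      split_ifs <;> fun_prop
    have h0 : Tendsto (g ∘ f) l (nhds 0) := by
      have hlim : Tendsto (fun r : ℝ => r * (D * |(q : ℝ)|)) l (nhds 0) := by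
        simpa using hr0.mul_const (D * |(q : ℝ)|)
      refine squeeze_zero_norm' ?_ hlim
      filter_upwards [hpos] with r hr
      have e : (g ∘ f) r = r * (u r q - u r 0) := (hu r hr).residual hq
      rw [e, Real.norm_eq_abs, abs_mul, abs_of_pos hr]
      exact mul_le_mul_of_nonneg_left
        ((hu r hr).abs_sub_zero_le hlp hlm hkp hkm hphi hr hz q hq) hr.le
    have hcp : MapClusterPt (g y) l (g ∘ f) := hy.continuousAt_comp hg.continuousAt
    have hne : (nhds (g y) ⊓ nhds 0).NeBot := ClusterPt.mono hcp h0
    exact (eq_of_nhds_neBot hne).symm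
  -- Points of `K` vanish at `0` and outside the interval, since `b` does.
  have hKzero : ∀ y ∈ K, y.2 0 = 0 ∧ ∀ q ∉ Finset.Icc qlow qhigh, y.2 q = 0 := by
    intro y hy
    refine ⟨?_, fun q hq => ?_⟩
    · have h := hy.2 0 (Set.mem_univ _)
      simpa [b] using h
    · have h := hy.2 q (Set.mem_univ _)
      simpa only [b, if_neg hq, neg_zero, Set.Icc_self, Set.mem_singleton_iff] using h
  obtain ⟨x, hxK, hx⟩ := hK.exists_mapClusterPt_of_frequently hmem.frequently
  have hxsol := hclus x hxK hx
  have hlim : Tendsto f l (nhds x) := by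
    refine hK.tendsto_nhds_of_unique_mapClusterPt hmem fun y hyK hy => ?_
    obtain ⟨h1, h2⟩ := (hclus y hyK hy).unique hlp hlm hkp hkm hz hxsol
      (hKzero y hyK).1 (hKzero x hxK).1
    refine Prod.ext h1 (funext fun q => ?_)
    by_cases hq : q ∈ Finset.Icc qlow qhigh
    · exact h2 q hq
    · rw [(hKzero y hyK).2 q hq, (hKzero x hxK).2 q hq]
  have hlim1 : Tendsto (fun r => r * u r 0) l (nhds x.1) :=
    (continuous_fst.tendsto x).comp hlim
  have hlim2 : ∀ q ∈ Finset.Icc qlow qhigh,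
      Tendsto (fun r => u r q - u r 0) l (nhds (x.2 q)) := by
    intro q hq
    have h := (((continuous_apply q).comp continuous_snd).tendsto x).comp hlim
    refine h.congr fun r => ?_
    simp only [Function.comp, hf, normPair, if_pos hq]
  refine ⟨x.1, x.2, fun q hq => ?_, hlim2, hxsol⟩
  have h := hlim1.add (hr0.mul (hlim2 q hq))
  rw [zero_mul, add_zero] at h
  exact h.congr fun r => by ring
end

section
/- Assume K̲ ≤ κ* ≤ K̄, and for each N ≥ 1 let κ_N be the unique element of (0, ∞) with g_N(κ_N) = 0. Then there exist constants C, c, N₀ ≥ 0 such that for every ε ∈ (0, 1], P( |κ_N − κ*| ≤ C N^{−1/2} √(ln(2N/ε)) + c N^{−1} for all N ≥ N₀ ln(2/ε) ) ≥ 1 − ε. -/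
/-! The estimator is controlled by a deterministic inequality plus a martingale tail bound.

Write `q n = exp (-κ* δ n)`. At `κ = κ*` the `n`-th summand of the score is
`δ n / (1 - q n) * (q n - Y n)`, a bounded martingale difference; so is `q n - Y n` itself. The
Azuma–Hoeffding inequality is proved directly from conditional expectations (`mgf_sum_le`,
`azuma`), because Mathlib's version asks for a standard Borel space. A union bound over `N`, with
deviations of size `√(6 N log (2N/ε))` so that the probabilities are summable with sum at most `ε`,
gives one event on which both martingales are under control for all `N` (`bad_event_le`).

On that event the number of zeros `∑ (1 - Y n)` is at least `p N / 2` with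
`p = 1 - exp (-κ* dlow)`, as soon as `N` is at least a constant times `log (2/ε)`
(`log_two_mul_div_le`). The score decreases with slope at least a constant times the number of
zeros (`score_sub_ge`), so `|κ_N - κ*|` is at most `|g_N(κ*)|` divided by a constant times `N`.
-/

open MeasureTheory

/-- The (negative) second derivative `J_N(κ)` of the regularised log-likelihood. -/
noncomputable def Jfun (d0 : ℝ) (delta Y : ℕ → ℝ) (N : ℕ) (kappa : ℝ) : ℝ :=
  (∑ n ∈ Finset.Icc 1 N,
      (1 - Y n) * (delta n) ^ 2
        * (Real.exp (-(kappa * delta n)) / (1 - Real.exp (-(kappa * delta n))) ^ 2))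
    + d0 ^ 2 * (Real.exp (-(kappa * d0)) / (1 - Real.exp (-(kappa * d0))) ^ 2)

/-- The first branch of the regularised score (valid for `κ ≤ K̄`). -/
noncomputable def scoreBase (d0 : ℝ) (delta Y : ℕ → ℝ) (N : ℕ) (kappa : ℝ) : ℝ :=
  (∑ n ∈ Finset.Icc 1 N,
      (-(delta n * Y n)
        + (1 - Y n) * delta n
            * (Real.exp (-(kappa * delta n)) / (1 - Real.exp (-(kappa * delta n))))))
    - d0 + d0 * (Real.exp (-(kappa * d0)) / (1 - Real.exp (-(kappa * d0))))

/-- The regularised score `g_N(κ)`. -/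
noncomputable def score (d0 Khigh : ℝ) (delta Y : ℕ → ℝ) (N : ℕ) (kappa : ℝ) : ℝ :=
  if kappa ≤ Khigh then scoreBase d0 delta Y N kappa
  else scoreBase d0 delta Y N Khigh - (kappa - Khigh) * Jfun d0 delta Y N Khigh

open ProbabilityTheory

/-! ### The Azuma–Hoeffding inequality -/

/-- Chord bound for the convex function `exp` on `[-l B, l B]`. -/
lemma exp_mul_le_cosh {B x l : ℝ} (hB : 0 < B) (hx : |x| ≤ B) :
    Real.exp (l * x) ≤ Real.cosh (l * B) + Real.sinh (l * B) / B * x := by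
  obtain ⟨h1, h2⟩ := abs_le.1 hx
  have ha : 0 ≤ (1 + x / B) / 2 := by
    have : -1 ≤ x / B := by rw [le_div_iff₀ hB]; linarith
    linarith
  have hb : 0 ≤ (1 - x / B) / 2 := by
    have : x / B ≤ 1 := by rw [div_le_iff₀ hB]; linarith
    linarith
  have h := convexOn_exp.2 (Set.mem_univ (l * B)) (Set.mem_univ (-(l * B))) ha hb (by ring)
  simp only [smul_eq_mul] at h
  have e : (1 + x / B) / 2 * (l * B) + (1 - x / B) / 2 * (-(l * B)) = l * x := by
    field_simp; ring
  rw [e] at h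
  refine h.trans (le_of_eq ?_)
  rw [Real.cosh_eq, Real.sinh_eq]
  field_simp; ring

section Azuma

lemma abs_partial_sum_le {Ω : Type*} {X : ℕ → Ω → ℝ} {B : ℝ} (hb : ∀ n ω, |X (n + 1) ω| ≤ B)
    (N : ℕ) (ω : Ω) :
    |∑ n ∈ Finset.Icc 1 N, X n ω| ≤ N * B := by
  refine (Finset.abs_sum_le_sum_abs _ _).trans ?_
  have : ∀ n ∈ Finset.Icc 1 N, |X n ω| ≤ B := fun n hn => by
    obtain ⟨h1, -⟩ := Finset.mem_Icc.1 hn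
    obtain ⟨k, rfl⟩ : ∃ k, n = k + 1 := ⟨n - 1, by omega⟩
    exact hb k ω
  refine (Finset.sum_le_card_nsmul _ _ _ this).trans ?_
  simp

lemma exp_partial_sum_le {Ω : Type*} {X : ℕ → Ω → ℝ} {B : ℝ}
    (hb : ∀ n ω, |X (n + 1) ω| ≤ B) (l : ℝ) (N : ℕ) (ω : Ω) :
    ‖Real.exp (l * ∑ n ∈ Finset.Icc 1 N, X n ω)‖ ≤ Real.exp (|l| * (N * B)) := by
  rw [Real.norm_eq_abs, Real.abs_exp, Real.exp_le_exp]
  refine (le_abs_self _).trans ?_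
  rw [abs_mul]
  exact mul_le_mul_of_nonneg_left (abs_partial_sum_le hb N ω) (abs_nonneg l)

variable {Ω : Type*} [m0 : MeasurableSpace Ω] {P : Measure Ω} [IsProbabilityMeasure P]
  {F : Filtration ℕ m0} {X : ℕ → Ω → ℝ} {B : ℝ}

lemma measurable_partial_sum (hX : ∀ n, Measurable[F (n + 1)] (X (n + 1))) (N : ℕ) :
    Measurable[F N] (fun ω => ∑ n ∈ Finset.Icc 1 N, X n ω) := by
  refine Finset.measurable_fun_sum _ fun n hn => ?_
  obtain ⟨h1, h2⟩ := Finset.mem_Icc.1 hn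
  obtain ⟨k, rfl⟩ : ∃ k, n = k + 1 := ⟨n - 1, by omega⟩
  exact (hX k).mono (F.mono h2) le_rfl

lemma integrable_exp_partial_sum (hX : ∀ n, Measurable[F (n + 1)] (X (n + 1)))
    (hb : ∀ n ω, |X (n + 1) ω| ≤ B) (l : ℝ) (N : ℕ) :
    Integrable (fun ω => Real.exp (l * ∑ n ∈ Finset.Icc 1 N, X n ω)) P := by
  refine Integrable.of_bound ?_ (Real.exp (|l| * (N * B)))
    (Filter.Eventually.of_forall (exp_partial_sum_le hb l N))
  exact (Real.measurable_exp.comp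
    (((measurable_partial_sum hX N).mono (F.le N) le_rfl).const_mul l)).aestronglyMeasurable

/-- Sub-Gaussian bound on the moment generating function of a sum of bounded martingale
differences. The term linear in the last difference given by `exp_mul_le_cosh` integrates to
zero. -/
lemma mgf_sum_le (hB : 0 < B) (hX : ∀ n, Measurable[F (n + 1)] (X (n + 1)))
    (hb : ∀ n ω, |X (n + 1) ω| ≤ B) (hc : ∀ n, P[X (n + 1)|F n] =ᵐ[P] 0) (l : ℝ) (N : ℕ) :
    ∫ ω, Real.exp (l * ∑ n ∈ Finset.Icc 1 N, X n ω) ∂P ≤ Real.exp (N * ((l * B) ^ 2 / 2)) := by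
  induction N with
  | zero => simp
  | succ N ih =>
    set Z : Ω → ℝ := fun ω => Real.exp (l * ∑ n ∈ Finset.Icc 1 N, X n ω) with hZ
    have hZi : Integrable Z P := integrable_exp_partial_sum hX hb l N
    have hZm : StronglyMeasurable[F N] Z :=
      (Real.measurable_exp.comp ((measurable_partial_sum hX N).const_mul l)).stronglyMeasurable
    have hXi : Integrable (X (N + 1)) P :=
      Integrable.of_bound ((hX N).mono (F.le _) le_rfl).aestronglyMeasurable B
        (Filter.Eventually.of_forall (hb N))
    have hZX : Integrable (Z * X (N + 1)) P :=
      hXi.bdd_mul hZi.aestronglyMeasurable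
        (Filter.Eventually.of_forall (exp_partial_sum_le hb l N))
    have h0 : ∫ ω, (Z * X (N + 1)) ω ∂P = 0 := by
      rw [← integral_condExp (F.le N)]
      have h1 : P[Z * X (N + 1)|F N] =ᵐ[P] 0 := by
        filter_upwards [condExp_mul_of_stronglyMeasurable_left hZm hZX hXi, hc N] with ω h1 h2
        rw [h1, Pi.mul_apply, h2]; simp
      rw [integral_congr_ae h1]; simp
    calc ∫ ω, Real.exp (l * ∑ n ∈ Finset.Icc 1 (N + 1), X n ω) ∂P
        ≤ ∫ ω, (Real.cosh (l * B) * Z ω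
            + Real.sinh (l * B) / B * (Z * X (N + 1)) ω) ∂P := by
          refine integral_mono (integrable_exp_partial_sum hX hb l (N + 1))
            ((hZi.const_mul _).add (hZX.const_mul _)) fun ω => ?_
          have h := exp_mul_le_cosh (l := l) hB (hb N ω)
          have hp : 0 ≤ Z ω := (Real.exp_pos _).le
          simp only [Pi.mul_apply]
          rw [Finset.sum_Icc_succ_top (by omega), mul_add, Real.exp_add]
          have := mul_le_mul_of_nonneg_left h hp
          simp only [hZ] at this ⊢
          linarith
      _ = Real.cosh (l * B) * ∫ ω, Z ω ∂P := by
          rw [integral_add (hZi.const_mul _) (hZX.const_mul _), integral_const_mul,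
            integral_const_mul, h0]
          ring
      _ ≤ Real.exp ((l * B) ^ 2 / 2) * Real.exp (N * ((l * B) ^ 2 / 2)) := by
          gcongr
          exact Real.cosh_le_exp_half_sq _
      _ = _ := by rw [← Real.exp_add]; push_cast; congr 1; ring

/-- Azuma–Hoeffding inequality, one-sided. -/
lemma azuma (hB : 0 < B) (hX : ∀ n, Measurable[F (n + 1)] (X (n + 1)))
    (hb : ∀ n ω, |X (n + 1) ω| ≤ B) (hc : ∀ n, P[X (n + 1)|F n] =ᵐ[P] 0)
    {N : ℕ} (hN : 1 ≤ N) {s : ℝ} (hs : 0 ≤ s) :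
    P.real {ω | B * s ≤ ∑ n ∈ Finset.Icc 1 N, X n ω} ≤ Real.exp (-(s ^ 2 / (2 * N))) := by
  have hN' : (0 : ℝ) < N := by exact_mod_cast hN
  -- `s / (N B)` is the minimiser of the Chernoff exponent
  have h := measure_ge_le_exp_mul_mgf (μ := P) (X := fun ω => ∑ n ∈ Finset.Icc 1 N, X n ω)
    (t := s / (N * B)) (B * s) (by positivity) (integrable_exp_partial_sum hX hb _ N)
  refine h.trans ((mul_le_mul_of_nonneg_left (mgf_sum_le hB hX hb hc _ N)
    (Real.exp_pos _).le).trans (le_of_eq ?_))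
  rw [← Real.exp_add]
  congr 1
  field_simp
  ring

/-- Azuma–Hoeffding inequality, two-sided. -/
lemma azuma_abs (hB : 0 < B) (hX : ∀ n, Measurable[F (n + 1)] (X (n + 1)))
    (hb : ∀ n ω, |X (n + 1) ω| ≤ B) (hc : ∀ n, P[X (n + 1)|F n] =ᵐ[P] 0)
    {N : ℕ} (hN : 1 ≤ N) {s : ℝ} (hs : 0 ≤ s) :
    P.real {ω | B * s < |∑ n ∈ Finset.Icc 1 N, X n ω|} ≤ 2 * Real.exp (-(s ^ 2 / (2 * N))) := by
  have h1 := azuma hB hX hb hc hN hs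
  have h2 := azuma (X := fun n => -X n) hB (fun n => (hX n).neg)
    (fun n ω => by simpa using hb n ω)
    (fun n => by
      filter_upwards [condExp_neg (μ := P) (X (n + 1)) (F n), hc n] with ω h1 h2
      rw [h1, Pi.neg_apply, h2]; simp) hN hs
  have hsub : {ω | B * s < |∑ n ∈ Finset.Icc 1 N, X n ω|} ⊆
      {ω | B * s ≤ ∑ n ∈ Finset.Icc 1 N, X n ω} ∪
        {ω | B * s ≤ ∑ n ∈ Finset.Icc 1 N, (-X n) ω} := by
    intro ω hω
    simp only [Set.mem_ofPred_eq, Set.mem_union, Pi.neg_apply, Finset.sum_neg_distrib] at hω ⊢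
    rcases lt_abs.1 hω with h | h
    · exact Or.inl h.le
    · exact Or.inr h.le
  have := (measureReal_mono (μ := P) hsub).trans (measureReal_union_le _ _)
  linarith

end Azuma

/-! ### The exceptional event -/

/-- Deviation threshold with `exp (-(devBound ε N)² / (2N)) = (ε / (2N))³`. -/
noncomputable def devBound (ε : ℝ) (N : ℕ) : ℝ := Real.sqrt (6 * N * Real.log (2 * N / ε))

lemma log_arg_nonneg {ε : ℝ} (hε : ε ∈ Set.Ioc (0 : ℝ) 1) {N : ℕ} (hN : 1 ≤ N) :
    0 ≤ Real.log (2 * N / ε) := by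
  have hN' : (1 : ℝ) ≤ N := by exact_mod_cast hN
  apply Real.log_nonneg
  rw [le_div_iff₀ hε.1]
  linarith [hε.2]

lemma four_mul_exp_devBound_le {ε : ℝ} (hε : ε ∈ Set.Ioc (0 : ℝ) 1) {N : ℕ} (hN : 1 ≤ N) :
    4 * Real.exp (-(devBound ε N ^ 2 / (2 * N))) ≤ ε / 2 * (1 / (N : ℝ) ^ 2) := by
  have hN' : (1 : ℝ) ≤ N := by exact_mod_cast hN
  have hL := log_arg_nonneg hε hN
  have hε0 := hε.1
  have e : -(devBound ε N ^ 2 / (2 * N)) = 3 * -Real.log (2 * N / ε) := by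
    rw [devBound, Real.sq_sqrt (by positivity)]
    field_simp; ring
  have e2 : Real.exp (3 * -Real.log (2 * N / ε)) = (ε / (2 * N)) ^ 3 := by
    have := Real.exp_nat_mul (-Real.log (2 * N / ε)) 3
    push_cast at this
    rw [this, Real.exp_neg, Real.exp_log (by positivity), inv_div]
  rw [e, e2]
  have h1 : 4 * (ε / (2 * (N : ℝ))) ^ 3 = ε / 2 * (1 / (N : ℝ) ^ 2) * (ε ^ 2 / N) := by
    field_simp; ring
  rw [h1]
  apply mul_le_of_le_one_right (by positivity)
  rw [div_le_one (by positivity)]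
  nlinarith [hε.2]

/-- Union bound over all sample sizes: the `N`-th event has probability at most `ε / (2 N²)`, and
`∑ 1 / N² = π² / 6 ≤ 2`. -/
lemma bad_event_le {Ω : Type*} [m0 : MeasurableSpace Ω] {P : Measure Ω} [IsProbabilityMeasure P]
    {F : Filtration ℕ m0} {X Z : ℕ → Ω → ℝ} {B : ℝ} (hB : 0 < B)
    (hX : ∀ n, Measurable[F (n + 1)] (X (n + 1)))
    (hXb : ∀ n ω, |X (n + 1) ω| ≤ B) (hXc : ∀ n, P[X (n + 1)|F n] =ᵐ[P] 0)
    (hZ : ∀ n, Measurable[F (n + 1)] (Z (n + 1)))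
    (hZb : ∀ n ω, |Z (n + 1) ω| ≤ 1) (hZc : ∀ n, P[Z (n + 1)|F n] =ᵐ[P] 0)
    {ε : ℝ} (hε : ε ∈ Set.Ioc (0 : ℝ) 1) :
    P {ω | ∃ N : ℕ, 1 ≤ N ∧ (B * devBound ε N < |∑ n ∈ Finset.Icc 1 N, X n ω| ∨
      1 * devBound ε N < |∑ n ∈ Finset.Icc 1 N, Z n ω|)} ≤ ENNReal.ofReal ε := by
  set E : ℕ → Set Ω := fun N => {ω | 1 ≤ N ∧ (B * devBound ε N < |∑ n ∈ Finset.Icc 1 N, X n ω| ∨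
      1 * devBound ε N < |∑ n ∈ Finset.Icc 1 N, Z n ω|)} with hE
  have hε0 := hε.1
  have hEN : ∀ N, P (E N) ≤ ENNReal.ofReal (ε / 2 * (1 / (N : ℝ) ^ 2)) := by
    intro N
    rcases Nat.lt_or_ge N 1 with h | hN
    · have : E N = ∅ := by
        ext ω; simp only [hE, Set.mem_ofPred_eq, Set.mem_empty_iff_false, iff_false]; omega
      rw [this]; simp
    · have hsub : E N ⊆ {ω | B * devBound ε N < |∑ n ∈ Finset.Icc 1 N, X n ω|} ∪
          {ω | 1 * devBound ε N < |∑ n ∈ Finset.Icc 1 N, Z n ω|} := fun ω hω => hω.2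
      have h1 := azuma_abs hB hX hXb hXc hN (Real.sqrt_nonneg (6 * N * Real.log (2 * N / ε)))
      have h2 := azuma_abs one_pos hZ hZb hZc hN
        (Real.sqrt_nonneg (6 * N * Real.log (2 * N / ε)))
      have h3 := (measureReal_mono (μ := P) hsub).trans (measureReal_union_le _ _)
      have h4 := four_mul_exp_devBound_le hε hN
      rw [← ofReal_measureReal (μ := P) (s := E N)]
      apply ENNReal.ofReal_le_ofReal
      simp only [devBound] at h1 h2 h3 h4 ⊢
      linarith
  have hsum := hasSum_zeta_two.mul_left (ε / 2)
  calc P {ω | ∃ N : ℕ, 1 ≤ N ∧ (B * devBound ε N < |∑ n ∈ Finset.Icc 1 N, X n ω| ∨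
      1 * devBound ε N < |∑ n ∈ Finset.Icc 1 N, Z n ω|)} = P (⋃ N, E N) := by
        congr 1; ext ω; simp [hE]
    _ ≤ ∑' N, P (E N) := measure_iUnion_le _
    _ ≤ ∑' N : ℕ, ENNReal.ofReal (ε / 2 * (1 / (N : ℝ) ^ 2)) := ENNReal.tsum_le_tsum hEN
    _ = ENNReal.ofReal (ε / 2 * (Real.pi ^ 2 / 6)) := by
        rw [← ENNReal.ofReal_tsum_of_nonneg (fun n => by positivity) hsum.summable, hsum.tsum_eq]
    _ ≤ ENNReal.ofReal ε := by
        apply ENNReal.ofReal_le_ofReal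
        have : Real.pi ^ 2 ≤ 12 := by nlinarith [Real.pi_lt_d2, Real.pi_pos]
        nlinarith

/-! ### Monotonicity of the score -/

lemma one_sub_exp_pos {x : ℝ} (hx : 0 < x) : 0 < 1 - Real.exp (-x) := by
  have : Real.exp (-x) < 1 := by simpa using hx
  linarith

lemma exp_div_eq {x : ℝ} (hx : 0 < x) :
    Real.exp (-x) / (1 - Real.exp (-x)) = 1 / (Real.exp x - 1) := by
  have h1 := one_sub_exp_pos hx
  have h2 : 0 < Real.exp x - 1 := by linarith [Real.add_one_lt_exp hx.ne']
  have h3 : Real.exp (-x) * Real.exp x = 1 := by rw [← Real.exp_add]; simp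
  rw [div_eq_div_iff h1.ne' h2.ne']
  linarith

/-- Lower bound on the decrease of `x ↦ 1 / (exp x - 1)`. -/
lemma exp_div_sub_ge {x y : ℝ} (hx : 0 < x) (hxy : x ≤ y) :
    (y - x) * Real.exp (-y) ≤
      Real.exp (-x) / (1 - Real.exp (-x)) - Real.exp (-y) / (1 - Real.exp (-y)) := by
  have hy := hx.trans_le hxy
  rw [exp_div_eq hx, exp_div_eq hy]
  have h1 : 0 < Real.exp x - 1 := by linarith [Real.add_one_lt_exp hx.ne']
  have h2 : 0 < Real.exp y - 1 := by linarith [Real.add_one_lt_exp hy.ne']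
  rw [div_sub_div _ _ h1.ne' h2.ne', le_div_iff₀ (by positivity)]
  have h3 : (y - x) * Real.exp x ≤ Real.exp y - Real.exp x := by
    have : Real.exp y = Real.exp x * Real.exp (y - x) := by rw [← Real.exp_add]; congr 1; ring
    rw [this]
    nlinarith [Real.add_one_le_exp (y - x), Real.exp_pos x]
  have h4 : Real.exp (-y) * (Real.exp y - 1) ≤ 1 := by
    have : Real.exp (-y) * Real.exp y = 1 := by rw [← Real.exp_add]; simp
    nlinarith [Real.exp_pos (-y)]
  calc (y - x) * Real.exp (-y) * ((Real.exp x - 1) * (Real.exp y - 1))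
      = (y - x) * (Real.exp x - 1) * (Real.exp (-y) * (Real.exp y - 1)) := by ring
    _ ≤ (y - x) * (Real.exp x - 1) * 1 := by
        apply mul_le_mul_of_nonneg_left h4
        exact mul_nonneg (by linarith) h1.le
    _ ≤ _ := by nlinarith

lemma exp_div_le_inv {x : ℝ} (hx : 0 < x) :
    Real.exp (-x) / (1 - Real.exp (-x)) ≤ 1 / x := by
  rw [exp_div_eq hx]
  exact one_div_le_one_div_of_le hx (by linarith [Real.add_one_le_exp x])

section Deterministic

variable {dlow dhigh d0 Khigh : ℝ} {d y : ℕ → ℝ}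

lemma scoreBase_sub_ge (hdlow : 0 < dlow) (hd0 : 0 < d0)
    (hd : ∀ n, 1 ≤ n → d n ∈ Set.Icc dlow dhigh) (hy : ∀ n, y n = 0 ∨ y n = 1) (N : ℕ)
    {a b : ℝ} (ha : 0 < a) (hab : a ≤ b) (hb : b ≤ Khigh) :
    (b - a) * (dlow ^ 2 * Real.exp (-(Khigh * dhigh)) * ∑ n ∈ Finset.Icc 1 N, (1 - y n)) ≤
      scoreBase d0 d y N a - scoreBase d0 d y N b := by
  have hreg := exp_div_sub_ge (mul_pos ha hd0) (mul_le_mul_of_nonneg_right hab hd0.le)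
  have hreg0 : 0 ≤ (b * d0 - a * d0) * Real.exp (-(b * d0)) :=
    mul_nonneg (by nlinarith) (Real.exp_pos _).le
  have hreg1 := mul_le_mul_of_nonneg_left (hreg0.trans hreg) hd0.le
  have hterm : ∀ n ∈ Finset.Icc 1 N,
      (b - a) * (dlow ^ 2 * Real.exp (-(Khigh * dhigh))) * (1 - y n) ≤
      (-(d n * y n) + (1 - y n) * d n * (Real.exp (-(a * d n)) / (1 - Real.exp (-(a * d n)))))
      - (-(d n * y n)
        + (1 - y n) * d n * (Real.exp (-(b * d n)) / (1 - Real.exp (-(b * d n))))) := by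
    intro n hn
    obtain ⟨h1, h2⟩ := hd n (Finset.mem_Icc.1 hn).1
    have hdn : 0 < d n := hdlow.trans_le h1
    rcases hy n with h | h
    · have h3 := exp_div_sub_ge (mul_pos ha hdn) (mul_le_mul_of_nonneg_right hab hdn.le)
      have h4 : Real.exp (-(Khigh * dhigh)) ≤ Real.exp (-(b * d n)) := by
        apply Real.exp_le_exp.2
        have : b * d n ≤ Khigh * dhigh :=
          mul_le_mul hb h2 hdn.le (by linarith)
        linarith
      have h5 : dlow ^ 2 * Real.exp (-(Khigh * dhigh)) ≤ d n ^ 2 * Real.exp (-(b * d n)) := by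
        gcongr
      have h6 := mul_le_mul_of_nonneg_left h5 (sub_nonneg.2 hab)
      have h7 := mul_le_mul_of_nonneg_left h3 hdn.le
      rw [h]
      nlinarith
    · rw [h]; simp
  have hs := Finset.sum_le_sum hterm
  rw [← Finset.mul_sum, Finset.sum_sub_distrib (s := Finset.Icc 1 N)
    (f := fun n => -(d n * y n)
      + (1 - y n) * d n * (Real.exp (-(a * d n)) / (1 - Real.exp (-(a * d n)))))] at hs
  simp only [scoreBase]
  linarith

lemma Jfun_ge (hdlow : 0 < dlow) (hd0 : 0 < d0) (hK : 0 < Khigh)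
    (hd : ∀ n, 1 ≤ n → d n ∈ Set.Icc dlow dhigh) (hy : ∀ n, y n = 0 ∨ y n = 1) (N : ℕ) :
    dlow ^ 2 * Real.exp (-(Khigh * dhigh)) * ∑ n ∈ Finset.Icc 1 N, (1 - y n) ≤
      Jfun d0 d y N Khigh := by
  have hreg : 0 ≤ d0 ^ 2 * (Real.exp (-(Khigh * d0)) / (1 - Real.exp (-(Khigh * d0))) ^ 2) := by
    positivity
  rw [Finset.mul_sum, Jfun]
  refine le_add_of_le_of_nonneg (Finset.sum_le_sum fun n hn => ?_) hreg
  obtain ⟨h1, h2⟩ := hd n (Finset.mem_Icc.1 hn).1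
  have hdn : 0 < d n := hdlow.trans_le h1
  rcases hy n with h | h
  · have h3 := one_sub_exp_pos (mul_pos hK hdn)
    have h4 : Real.exp (-(Khigh * dhigh)) ≤
        Real.exp (-(Khigh * d n)) / (1 - Real.exp (-(Khigh * d n))) ^ 2 := by
      rw [le_div_iff₀ (by positivity)]
      have h5 : Real.exp (-(Khigh * dhigh)) ≤ Real.exp (-(Khigh * d n)) := by
        apply Real.exp_le_exp.2
        nlinarith
      have h6 : (1 - Real.exp (-(Khigh * d n))) ^ 2 ≤ 1 :=
        pow_le_one₀ h3.le (by linarith [Real.exp_pos (-(Khigh * d n))])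
      exact (mul_le_of_le_one_right (Real.exp_pos _).le h6).trans h5
    rw [h]
    simp only [sub_zero, mul_one, one_mul]
    gcongr
  · rw [h]; simp

/-- The score decreases at least linearly, with slope proportional to the number of zeros among
the observations, from any starting point in `(0, Khigh]`. -/
lemma score_sub_ge (hdlow : 0 < dlow) (hd0 : 0 < d0)
    (hd : ∀ n, 1 ≤ n → d n ∈ Set.Icc dlow dhigh) (hy : ∀ n, y n = 0 ∨ y n = 1) (N : ℕ)
    {a b : ℝ} (ha : 0 < a) (hab : a ≤ b) (haK : a ≤ Khigh) :
    (b - a) * (dlow ^ 2 * Real.exp (-(Khigh * dhigh)) * ∑ n ∈ Finset.Icc 1 N, (1 - y n)) ≤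
      score d0 Khigh d y N a - score d0 Khigh d y N b := by
  rw [score, if_pos haK, score]
  split_ifs with h
  · exact scoreBase_sub_ge hdlow hd0 hd hy N ha hab h
  · have h1 := scoreBase_sub_ge (Khigh := Khigh) hdlow hd0 hd hy N ha haK le_rfl
    have h2 := Jfun_ge (Khigh := Khigh) hdlow hd0 (ha.trans_le haK) hd hy N
    have h3 := mul_le_mul_of_nonneg_left h2 (sub_nonneg.2 (not_le.1 h).le)
    nlinarith

/-- At `k`, the score is the sum of the differences `d n / (1 - q n) * (q n - y n)`, with
`q n = exp (-(k * d n))`, plus the regularising term. -/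
lemma score_at (hdlow : 0 < dlow) (hd : ∀ n, 1 ≤ n → d n ∈ Set.Icc dlow dhigh) (N : ℕ) {k : ℝ}
    (hk : 0 < k) (hkK : k ≤ Khigh) :
    score d0 Khigh d y N k =
      (∑ n ∈ Finset.Icc 1 N,
        d n / (1 - Real.exp (-(k * d n))) * (Real.exp (-(k * d n)) - y n))
      + (-d0 + d0 * (Real.exp (-(k * d0)) / (1 - Real.exp (-(k * d0))))) := by
  rw [score, if_pos hkK, scoreBase, sub_add, sub_eq_add_neg]
  congr 1
  · refine Finset.sum_congr rfl fun n hn => ?_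
    have h1 := one_sub_exp_pos (mul_pos hk (hdlow.trans_le (hd n (Finset.mem_Icc.1 hn).1).1))
    generalize Real.exp (-(k * d n)) = e at h1
    have := h1.ne'
    field_simp
    ring
  · ring

lemma abs_reg_le (hd0 : 0 < d0) {k : ℝ} (hk : 0 < k) :
    |-d0 + d0 * (Real.exp (-(k * d0)) / (1 - Real.exp (-(k * d0))))| ≤ d0 + 1 / k := by
  have h1 := exp_div_le_inv (mul_pos hk hd0)
  have h2 : 0 ≤ Real.exp (-(k * d0)) / (1 - Real.exp (-(k * d0))) :=
    div_nonneg (Real.exp_pos _).le (one_sub_exp_pos (mul_pos hk hd0)).le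
  have h3 := mul_le_mul_of_nonneg_left h1 hd0.le
  have h4 : d0 * (1 / (k * d0)) = 1 / k := by field_simp
  have h5 := mul_nonneg hd0.le h2
  have : 0 < 1 / k := by positivity
  rw [abs_le]
  constructor <;> linarith

end Deterministic

/-! ### The sample size threshold and the final estimate -/

/-- For `N` beyond a constant times `log (2/ε)`, one has `log (2N/ε) ≤ q N`. Since `ε ≤ 1`, the
hypothesis also bounds `N` below by `16 / q²`, which absorbs `log N ≤ 2 √N`. -/
lemma log_two_mul_div_le {q ε : ℝ} (hq : 0 < q) (hε : ε ∈ Set.Ioc (0 : ℝ) 1) {N : ℕ} (hN : 1 ≤ N)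
    (h : (2 / q + 16 / (q ^ 2 * Real.log 2)) * Real.log (2 / ε) ≤ N) :
    Real.log (2 * N / ε) ≤ q * N := by
  have hN' : (1 : ℝ) ≤ N := by exact_mod_cast hN
  have hε0 := hε.1
  have hl2 : 0 < Real.log 2 := Real.log_pos (by norm_num)
  have hl : Real.log 2 ≤ Real.log (2 / ε) := by
    apply Real.log_le_log (by norm_num)
    rw [le_div_iff₀ hε0]
    linarith [hε.2]
  have e : Real.log (2 * N / ε) = Real.log N + Real.log (2 / ε) := by
    rw [← Real.log_mul (by positivity) (by positivity)]
    congr 1; ring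
  rw [add_mul] at h
  have h1 : 0 ≤ 2 / q * Real.log (2 / ε) := mul_nonneg (by positivity) (hl2.le.trans hl)
  have h2 : 16 / q ^ 2 ≤ 16 / (q ^ 2 * Real.log 2) * Real.log (2 / ε) := by
    calc 16 / q ^ 2 = 16 / (q ^ 2 * Real.log 2) * Real.log 2 := by field_simp
      _ ≤ _ := by gcongr
  have h3 : Real.log (2 / ε) ≤ q * N / 2 := by
    have : 2 / q * Real.log (2 / ε) ≤ N := by
      have : 0 < 16 / q ^ 2 := by positivity
      linarith
    rw [div_mul_eq_mul_div, div_le_iff₀ hq] at this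
    linarith
  have h4 : 4 ≤ q * Real.sqrt N := by
    have : 16 / q ^ 2 ≤ N := by linarith
    have h5 : Real.sqrt (16 / q ^ 2) ≤ Real.sqrt N := Real.sqrt_le_sqrt this
    have h6 : Real.sqrt (16 / q ^ 2) = 4 / q := by
      rw [show 16 / q ^ 2 = (4 / q) ^ 2 by ring, Real.sqrt_sq (by positivity)]
    rw [h6, div_le_iff₀ hq] at h5
    linarith
  have h7 : Real.log N ≤ 2 * Real.sqrt N := by
    have hs : 0 < Real.sqrt N := Real.sqrt_pos.2 (by linarith)
    have h8 := Real.log_le_sub_one_of_pos hs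
    rw [Real.log_sqrt (by linarith)] at h8
    linarith
  have h9 : 2 * Real.sqrt N ≤ q * N / 2 := by
    have := Real.mul_self_sqrt (show (0 : ℝ) ≤ N by linarith)
    nlinarith [Real.sqrt_nonneg N]
  linarith

/-- A root of a function decreasing with slope at least `m` is close to any point where the
function is small. -/
lemma root_close {m a b G : ℝ} (hm : 0 < m) (h1 : a ≤ b → (b - a) * m ≤ G)
    (h2 : b ≤ a → (a - b) * m ≤ -G) : |b - a| ≤ |G| / m := by
  rw [le_div_iff₀ hm]
  rcases le_total a b with h | h
  · rw [abs_of_nonneg (sub_nonneg.2 h)]; exact (h1 h).trans (le_abs_self _)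
  · rw [abs_of_nonpos (sub_nonpos.2 h), neg_sub]; exact (h2 h).trans (neg_le_abs _)

theorem stmt18 {Ω : Type*} [m0 : MeasurableSpace Ω] (P : Measure Ω)
    [IsProbabilityMeasure P] (F : Filtration ℕ m0)
    (kstar dlow dhigh d0 Klow Khigh : ℝ)
    (hk : 0 < kstar) (hd0 : 0 < dlow) (hdd : dlow ≤ dhigh) (hd0' : 0 < d0)
    (hK : 0 < Klow) (hKK : Klow < Khigh)
    (hkl : Klow ≤ kstar) (hkh : kstar ≤ Khigh)
    (delta : ℕ → Ω → ℝ) (Y : ℕ → Ω → ℝ)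
    (hdmeas : ∀ n, 1 ≤ n → Measurable[F (n - 1)] (delta n))
    (hdval : ∀ n, 1 ≤ n → ∀ ω, delta n ω ∈ Set.Icc dlow dhigh)
    (hYmeas : ∀ n, 1 ≤ n → Measurable[F n] (Y n))
    (hYval : ∀ n ω, Y n ω = 0 ∨ Y n ω = 1)
    (hcond : ∀ n, 1 ≤ n →
      P[Y n|F (n - 1)] =ᵐ[P] fun ω => Real.exp (-(kstar * delta n ω)))
    -- κ_N is the unique positive root of the regularised score g_N
    (kappaN : ℕ → Ω → ℝ)
    (hpos : ∀ N, 1 ≤ N → ∀ ω, 0 < kappaN N ω)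
    (hroot : ∀ N, 1 ≤ N → ∀ ω,
      score d0 Khigh (fun n => delta n ω) (fun n => Y n ω) N (kappaN N ω) = 0)
    (huniq : ∀ N, 1 ≤ N → ∀ ω, ∀ kappa : ℝ, 0 < kappa →
      score d0 Khigh (fun n => delta n ω) (fun n => Y n ω) N kappa = 0 →
      kappa = kappaN N ω) :
    ∃ C : ℝ, 0 ≤ C ∧ ∃ c : ℝ, 0 ≤ c ∧ ∃ N0 : ℝ, 0 ≤ N0 ∧
      ∀ ε : ℝ, ε ∈ Set.Ioc (0 : ℝ) 1 →
        ENNReal.ofReal (1 - ε) ≤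
          P {ω | ∀ N : ℕ, 1 ≤ N → N0 * Real.log (2 / ε) ≤ (N : ℝ) →
                |kappaN N ω - kstar|
                  ≤ C / Real.sqrt N * Real.sqrt (Real.log (2 * N / ε)) + c / N} := by
  set q : ℕ → Ω → ℝ := fun n ω => Real.exp (-(kstar * delta n ω)) with hq
  set w : ℕ → Ω → ℝ := fun n ω => delta n ω / (1 - q n ω) with hw
  set Z : ℕ → Ω → ℝ := fun n => q n - Y n with hZdef
  set X : ℕ → Ω → ℝ := fun n => w n * Z n with hXdef
  set p : ℝ := 1 - Real.exp (-(kstar * dlow)) with hp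
  set r : ℝ := dlow ^ 2 * Real.exp (-(Khigh * dhigh)) with hr
  -- `δ / (1 - exp (-κ* δ)) = δ + δ exp (-κ* δ) / (1 - exp (-κ* δ))` is at most `δ + 1/κ*`
  set B : ℝ := dhigh + 1 / kstar with hBdef
  have hp0 : 0 < p := one_sub_exp_pos (mul_pos hk hd0)
  have hr0 : 0 < r := by positivity
  have hB : 0 < B := by have := hd0.trans_le hdd; positivity
  have hdpos : ∀ n ω, 0 < delta (n + 1) ω := fun n ω =>
    hd0.trans_le (hdval (n + 1) (by omega) ω).1
  have hqpos : ∀ n ω, 0 < q n ω := fun n ω => Real.exp_pos _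
  have hq1 : ∀ n ω, 0 < 1 - q (n + 1) ω := fun n ω => one_sub_exp_pos (mul_pos hk (hdpos n ω))
  have hdm : ∀ n, Measurable[F n] (delta (n + 1)) := fun n => hdmeas (n + 1) (by omega)
  have hqm : ∀ n, Measurable[F n] (q (n + 1)) := fun n =>
    Real.measurable_exp.comp ((hdm n).const_mul kstar).neg
  have hwm : ∀ n, Measurable[F n] (w (n + 1)) := fun n =>
    (hdm n).div (measurable_const.sub (hqm n))
  have hZm : ∀ n, Measurable[F (n + 1)] (Z (n + 1)) := fun n =>
    ((hqm n).mono (F.mono n.le_succ) le_rfl).sub (hYmeas (n + 1) (by omega))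
  have hZb : ∀ n ω, |Z (n + 1) ω| ≤ 1 := fun n ω => by
    have h1 := hq1 n ω
    have h2 := hqpos (n + 1) ω
    simp only [hZdef, Pi.sub_apply]
    rw [abs_le]
    rcases hYval (n + 1) ω with h | h <;> rw [h] <;> constructor <;> linarith
  have hwb : ∀ n ω, |w (n + 1) ω| ≤ B := fun n ω => by
    have h1 := hdpos n ω
    have h2 := exp_div_le_inv (mul_pos hk h1)
    have h3 := mul_le_mul_of_nonneg_left h2 h1.le
    have h4 : delta (n + 1) ω * (1 / (kstar * delta (n + 1) ω)) = 1 / kstar := by field_simp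
    have h5 : w (n + 1) ω =
        delta (n + 1) ω + delta (n + 1) ω * (q (n + 1) ω / (1 - q (n + 1) ω)) := by
      have := (hq1 n ω).ne'
      simp only [hw]
      field_simp
      ring
    have h7 : 0 ≤ w (n + 1) ω := div_nonneg h1.le (hq1 n ω).le
    rw [abs_of_nonneg h7, h5]
    have h6 := (hdval (n + 1) (by omega) ω).2
    simp only [hq] at h3 ⊢
    linarith
  have hYi : ∀ n, Integrable (Y (n + 1)) P := fun n =>
    Integrable.of_bound ((hYmeas (n + 1) (by omega)).mono (F.le _) le_rfl).aestronglyMeasurable 1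
      (Filter.Eventually.of_forall fun ω => by rcases hYval (n + 1) ω with h | h <;> simp [h])
  have hqi : ∀ n, Integrable (q (n + 1)) P := fun n =>
    Integrable.of_bound ((hqm n).mono (F.le _) le_rfl).aestronglyMeasurable 1
      (Filter.Eventually.of_forall fun ω => by
        rw [Real.norm_eq_abs, abs_of_pos (hqpos _ _)]; linarith [hq1 n ω])
  have hZc : ∀ n, P[Z (n + 1)|F n] =ᵐ[P] 0 := fun n => by
    have h1 := condExp_of_stronglyMeasurable (F.le n) (hqm n).stronglyMeasurable (hqi n)
    filter_upwards [condExp_sub (hqi n) (hYi n) (F n), hcond (n + 1) (by omega)] with ω h2 h3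
    rw [Nat.add_sub_cancel] at h3
    simp only [hZdef]
    rw [h2, Pi.sub_apply, h1, h3]
    simp [hq]
  have hXm : ∀ n, Measurable[F (n + 1)] (X (n + 1)) := fun n =>
    ((hwm n).mono (F.mono n.le_succ) le_rfl).mul (hZm n)
  have hXb : ∀ n ω, |X (n + 1) ω| ≤ B := fun n ω => by
    have := mul_le_mul (hwb n ω) (hZb n ω) (abs_nonneg _) hB.le
    simp only [hXdef, Pi.mul_apply, abs_mul]
    linarith
  have hXc : ∀ n, P[X (n + 1)|F n] =ᵐ[P] 0 := fun n => by
    filter_upwards [condExp_stronglyMeasurable_mul_of_bound (F.le n) (hwm n).stronglyMeasurable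
      ((hqi n).sub (hYi n)) B (Filter.Eventually.of_forall (hwb n)), hZc n] with ω h1 h2
    simp only [hXdef]
    have h3 : P[Z (n + 1)|F n] ω = 0 := h2
    have h4 : P[w (n + 1) * Z (n + 1)|F n] ω = _ := h1
    rw [h4, Pi.mul_apply]
    exact mul_eq_zero_of_right _ h3
  -- `p² / 24` makes `devBound ε N ≤ p N / 2`
  refine ⟨2 * B * Real.sqrt 6 / (r * p), by positivity, 2 * (d0 + 1 / kstar) / (r * p),
    by positivity, 2 / (p ^ 2 / 24) + 16 / ((p ^ 2 / 24) ^ 2 * Real.log 2), ?_, ?_⟩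
  · have : 0 < Real.log 2 := Real.log_pos (by norm_num)
    positivity
  intro ε hε
  have hbad := bad_event_le hB hXm hXb hXc hZm hZb hZc hε
  set bad : Set Ω := {ω | ∃ N : ℕ, 1 ≤ N ∧
    (B * devBound ε N < |∑ n ∈ Finset.Icc 1 N, X n ω| ∨
      1 * devBound ε N < |∑ n ∈ Finset.Icc 1 N, Z n ω|)} with hbaddef
  have hgood : ENNReal.ofReal (1 - ε) ≤ P badᶜ := by
    have h1 : (1 : ENNReal) ≤ P bad + P badᶜ := by
      rw [← measure_univ (μ := P), ← Set.union_compl_self bad]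
      exact measure_union_le _ _
    rw [ENNReal.ofReal_sub _ hε.1.le, ENNReal.ofReal_one]
    exact tsub_le_iff_left.2 (h1.trans (by gcongr))
  refine hgood.trans (measure_mono fun ω hω => ?_)
  intro N hN hNε
  have hN' : (0 : ℝ) < N := by exact_mod_cast hN
  have hXs : |∑ n ∈ Finset.Icc 1 N, X n ω| ≤ B * devBound ε N :=
    le_of_not_gt fun h => hω ⟨N, hN, Or.inl h⟩
  have hZs : |∑ n ∈ Finset.Icc 1 N, Z n ω| ≤ 1 * devBound ε N :=
    le_of_not_gt fun h => hω ⟨N, hN, Or.inr h⟩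
  simp only [hXdef, hZdef, Pi.mul_apply, Pi.sub_apply] at hXs hZs
  have hL := log_arg_nonneg hε hN
  have hLq := log_two_mul_div_le (q := p ^ 2 / 24) (by positivity) hε hN hNε
  have hdev : devBound ε N ≤ p * N / 2 := by
    rw [devBound]
    apply Real.sqrt_le_iff.2 ⟨by positivity, ?_⟩
    nlinarith [mul_le_mul_of_nonneg_left hLq hN'.le]
  have hA : p * N / 2 ≤ ∑ n ∈ Finset.Icc 1 N, (1 - Y n ω) := by
    have h1 : (N : ℝ) * p ≤ ∑ n ∈ Finset.Icc 1 N, (1 - q n ω) := by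
      have : ∀ n ∈ Finset.Icc 1 N, p ≤ 1 - q n ω := fun n hn => by
        have := (hdval n (Finset.mem_Icc.1 hn).1 ω).1
        have : q n ω ≤ Real.exp (-(kstar * dlow)) := Real.exp_le_exp.2 (by nlinarith)
        linarith
      have := Finset.card_nsmul_le_sum _ _ _ this
      simpa using this
    have h2 : ∑ n ∈ Finset.Icc 1 N, (1 - Y n ω)
        = ∑ n ∈ Finset.Icc 1 N, (1 - q n ω) + ∑ n ∈ Finset.Icc 1 N, (q n ω - Y n ω) := by
      rw [← Finset.sum_add_distrib]
      exact Finset.sum_congr rfl fun n _ => by ring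
    have h3 := (abs_le.1 hZs).1
    linarith
  set A : ℝ := ∑ n ∈ Finset.Icc 1 N, (1 - Y n ω) with hAdef
  have hA0 : 0 < A := lt_of_lt_of_le (by positivity) hA
  have hd : ∀ n, 1 ≤ n → (fun n => delta n ω) n ∈ Set.Icc dlow dhigh := fun n hn => hdval n hn ω
  have hy : ∀ n, (fun n => Y n ω) n = 0 ∨ (fun n => Y n ω) n = 1 := fun n => hYval n ω
  set G : ℝ := score d0 Khigh (fun n => delta n ω) (fun n => Y n ω) N kstar with hG
  have hclose : |kappaN N ω - kstar| ≤ |G| / (r * A) := by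
    refine root_close (by positivity) (fun h => ?_) (fun h => ?_)
    · have := score_sub_ge hd0 hd0' hd hy N hk h hkh
      rwa [hroot N hN ω, sub_zero] at this
    · have := score_sub_ge hd0 hd0' hd hy N (hpos N hN ω) h (h.trans hkh)
      rwa [hroot N hN ω, zero_sub] at this
  have hGle : |G| ≤ B * devBound ε N + (d0 + 1 / kstar) := by
    rw [hG, score_at hd0 hd N hk hkh]
    exact (abs_add_le _ _).trans (add_le_add hXs (abs_reg_le hd0' hk))
  refine hclose.trans ?_
  calc |G| / (r * A) ≤ (B * devBound ε N + (d0 + 1 / kstar)) / (r * (p * N / 2)) := by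
        have := (abs_nonneg G).trans hGle
        gcongr
    _ = _ := by
      rw [devBound, mul_assoc, Real.sqrt_mul (by norm_num), Real.sqrt_mul hN'.le]
      have hs : 0 < Real.sqrt N := Real.sqrt_pos.2 hN'
      have hss : (N : ℝ) = Real.sqrt N * Real.sqrt N := (Real.mul_self_sqrt hN'.le).symm
      generalize Real.log (2 * N / ε) = L
      generalize Real.sqrt N = s at hs hss
      rw [hss]
      field_simp
end
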